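/- In the regular ℤ/N-colored setup with generic parameters, fix an N-tuple λ̄ of Young diagrams, ω ∈ ℤ/N, and 𝔮_ω ∈ ℂ. With A_ω = ã_ω/ε₁, κ̃ = ε̃₂/ε₁, k_ω = k_ω(λ̄), d_ω = k_{ω−1} − k_ω − A_ω, c_ω = (ε₁/2)k_ω + Σ_{boxes of color ω}(ã_{ω′}+c̃(i,j)), M_ω = (m̃_ω^+ + m̃_ω^−)/(2ε₁) and δμ_ω = (m̃_ω^+ − m̃_ω^−)/(2ε₁), the coefficient of x^{−1} in the large-x Laurent expansion of the fractional qq-character 𝒳_ω(x)|_{λ̄} = Y_{ω+1}(x+ε̃)|_{λ̄} + 𝔮_ω·P_ω(x)/Y_ω(x)|_{λ̄} equals ε₁² times [ (c_ω − c_{ω+1} − 𝔮_ω(c_{ω−1} − c_ω))/ε₁ + κ̃·(k_ω − 𝔮_ω·k_{ω−1}) + 𝔮_ω·( (d_ω + M_ω)² − δμ_ω² − d_ω² ) + ½·( d_{ω+1}² + 𝔮_ω·d_ω² + 𝔮_ω·A_ω² − A_{ω+1}² ) ]. -/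

import Mathlib

open scoped BigOperators

noncomputable section

/-- The content `c̃(i, j) = (i−1)ε₁ + (j−1)ε̃₂` of a box, in 0-based coordinates. -/
def ctil (ε₁ ε₂t : ℂ) (c : ℕ × ℕ) : ℂ := (c.1 : ℂ) * ε₁ + (c.2 : ℂ) * ε₂t

/-- The instanton charge `k_ω(λ̄)`: the number of boxes of `λ̄` of color `ω`,
where a (0-based) box `(i, j)` of `λ^{(ω′)}` has color `ω′ + j`. -/
def kcharge (N : ℕ) [NeZero N] (lam : ZMod N → YoungDiagram) (ω : ZMod N) : ℕ :=
  ∑ ω' : ZMod N, ((lam ω').cells.filter fun c => ω' + (c.2 : ZMod N) = ω).card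

/-- The colored Y-observable `Y_ω(x + s)|_λ̄ ∈ ℂ(x)` (the variable is shifted by `s`). -/
def Ycol (N : ℕ) [NeZero N] (ε₁ ε₂t : ℂ) (aT : ZMod N → ℂ) (ω : ZMod N) (s : ℂ)
    (lam : ZMod N → YoungDiagram) : RatFunc ℂ :=
  (RatFunc.X + RatFunc.C s - RatFunc.C (aT ω)) *
    ∏ ω' : ZMod N, ∏ c ∈ (lam ω').cells,
      ((if ω' + (c.2 : ZMod N) = ω then
          (RatFunc.X + RatFunc.C s - RatFunc.C (aT ω' + ctil ε₁ ε₂t c + ε₁)) /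
            (RatFunc.X + RatFunc.C s - RatFunc.C (aT ω' + ctil ε₁ ε₂t c))
        else 1) *
       (if ω' + (c.2 : ZMod N) = ω - 1 then
          (RatFunc.X + RatFunc.C s - RatFunc.C (aT ω' + ctil ε₁ ε₂t c + ε₂t)) /
            (RatFunc.X + RatFunc.C s - RatFunc.C (aT ω' + ctil ε₁ ε₂t c + ε₁ + ε₂t))
        else 1))

/-- The observable `c_ω = (ε₁/2)·k_ω + Σ_{boxes of color ω} (ã_{ω′} + c̃(i,j))`. -/
def cobs (N : ℕ) [NeZero N] (ε₁ ε₂t : ℂ) (aT : ZMod N → ℂ)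
    (lam : ZMod N → YoungDiagram) (ω : ZMod N) : ℂ :=
  ε₁ / 2 * (kcharge N lam ω : ℂ) +
    ∑ ω' : ZMod N,
      ∑ c ∈ (lam ω').cells.filter fun c => ω' + (c.2 : ZMod N) = ω,
        (aT ω' + ctil ε₁ ε₂t c)

/-- The observable `d_ω = k_{ω−1} − k_ω − A_ω` with `A_ω = ã_ω/ε₁`. -/
def dobs (N : ℕ) [NeZero N] (ε₁ : ℂ) (aT : ZMod N → ℂ)
    (lam : ZMod N → YoungDiagram) (ω : ZMod N) : ℂ :=
  (kcharge N lam (ω - 1) : ℂ) - (kcharge N lam ω : ℂ) - aT ω / ε₁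

lemma evtl_ne (p : Polynomial ℂ) (hp : p ≠ 0) :
    ∀ᶠ x in Filter.cocompact ℂ, Polynomial.eval₂ (RingHom.id ℂ) x p ≠ 0 := by
  have hfin : {x : ℂ | Polynomial.eval₂ (RingHom.id ℂ) x p = 0}.Finite := by
    exact Polynomial.finite_setOfPred_isRoot hp
  have := hfin.isCompact.compl_mem_cocompact
  filter_upwards [this] with x hx
  simpa using hx

lemma evtl_denom (f : RatFunc ℂ) :
    ∀ᶠ x in Filter.cocompact ℂ, Polynomial.eval₂ (RingHom.id ℂ) x f.denom ≠ 0 :=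
  evtl_ne _ (RatFunc.denom_ne_zero f)

lemma evtl_ne_zero : ∀ᶠ x : ℂ in Filter.cocompact ℂ, x ≠ 0 := by
  have := (isCompact_singleton (x := (0:ℂ))).compl_mem_cocompact
  filter_upwards [this] with x hx
  simpa using hx

lemma tinv : Filter.Tendsto (fun x : ℂ => x⁻¹) (Filter.cocompact ℂ) (nhds 0) :=
  by simpa [Metric.cobounded_eq_cocompact] using Filter.tendsto_inv₀_cobounded (α := ℂ)

lemma evtl_mul (f g : RatFunc ℂ) : ∀ᶠ x in Filter.cocompact ℂ,
    RatFunc.eval (RingHom.id ℂ) x (f * g) =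
      RatFunc.eval (RingHom.id ℂ) x f * RatFunc.eval (RingHom.id ℂ) x g := by
  filter_upwards [evtl_denom f, evtl_denom g] with x h1 h2
  exact RatFunc.eval_mul _ _ h1 h2

lemma evtl_add (f g : RatFunc ℂ) : ∀ᶠ x in Filter.cocompact ℂ,
    RatFunc.eval (RingHom.id ℂ) x (f + g) =
      RatFunc.eval (RingHom.id ℂ) x f + RatFunc.eval (RingHom.id ℂ) x g := by
  filter_upwards [evtl_denom f, evtl_denom g] with x h1 h2
  exact RatFunc.eval_add _ _ h1 h2

/-- `f = exp (u / x + v / x ^ 2 + o(x ^ (-2)))` at infinity. -/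
def LE2 (f : RatFunc ℂ) (u v : ℂ) : Prop :=
  ∃ r : ℂ → ℂ, Filter.Tendsto r (Filter.cocompact ℂ) (nhds (v + u ^ 2 / 2)) ∧
    ∀ᶠ x in Filter.cocompact ℂ,
      RatFunc.eval (RingHom.id ℂ) x f = 1 + u * x⁻¹ + r x * x⁻¹ ^ 2

lemma LE2.congr {f : RatFunc ℂ} {u v u' v' : ℂ} (h : LE2 f u v) (hu : u = u') (hv : v = v') :
    LE2 f u' v' := by subst hu hv; exact h

lemma LE2.one : LE2 1 0 0 := ⟨fun _ => 0, by simp, by simp⟩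

lemma LE2.mul {f g : RatFunc ℂ} {u v u' v' : ℂ} (hf : LE2 f u v) (hg : LE2 g u' v') :
    LE2 (f * g) (u + u') (v + v') := by
  obtain ⟨r, hr, er⟩ := hf
  obtain ⟨t, ht, et⟩ := hg
  refine ⟨fun x => r x + t x + u * u' + (u * t x + u' * r x) * x⁻¹ + r x * t x * x⁻¹ ^ 2, ?_, ?_⟩
  · have := (((hr.add ht).add_const (u * u')).add
      (((ht.const_mul u).add (hr.const_mul u')).mul tinv)).add ((hr.mul ht).mul (tinv.pow 2))
    convert this using 2
    ring
  · filter_upwards [er, et, evtl_mul f g] with x h1 h2 h3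
    rw [h3, h1, h2]; ring

lemma LE2.tendsto {f : RatFunc ℂ} {u v : ℂ} (hf : LE2 f u v) :
    Filter.Tendsto (fun x => RatFunc.eval (RingHom.id ℂ) x f) (Filter.cocompact ℂ) (nhds 1) := by
  obtain ⟨r, hr, er⟩ := hf
  have : Filter.Tendsto (fun x => 1 + u * x⁻¹ + r x * x⁻¹ ^ 2) (Filter.cocompact ℂ) (nhds 1) := by
    have := ((tinv.const_mul u).const_add 1).add (hr.mul (tinv.pow 2))
    convert this using 2
    simp
  exact this.congr' (by filter_upwards [er] with x hx using hx.symm)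

lemma LE2.inv {f : RatFunc ℂ} {u v : ℂ} (hf : LE2 f u v) : LE2 f⁻¹ (-u) (-v) := by
  have ht := hf.tendsto
  have hne : ∀ᶠ x in Filter.cocompact ℂ, RatFunc.eval (RingHom.id ℂ) x f ≠ 0 :=
    ht.eventually_ne one_ne_zero
  have hf0 : f ≠ 0 := by
    rintro rfl
    obtain ⟨x, hx⟩ := hne.exists
    simp at hx
  obtain ⟨r, hr, er⟩ := hf
  refine ⟨fun x => (u ^ 2 - r x + u * r x * x⁻¹) * (RatFunc.eval (RingHom.id ℂ) x f)⁻¹, ?_, ?_⟩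
  · have := ((hr.const_sub (u ^ 2)).add ((hr.const_mul u).mul tinv)).mul (ht.inv₀ one_ne_zero)
    convert this using 2
    ring
  · filter_upwards [er, hne, evtl_mul f f⁻¹] with x h1 h2 h3
    rw [mul_inv_cancel₀ hf0, RatFunc.eval_one] at h3
    rw [eq_inv_of_mul_eq_one_right h3.symm]
    rw [← mul_right_inj' h2, mul_add, mul_left_comm _ _ ((_ : ℂ) ^ 2)] 
    field_simp
    rw [h1]
    ring

lemma LE2.div {f g : RatFunc ℂ} {u v u' v' : ℂ} (hf : LE2 f u v) (hg : LE2 g u' v') :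
    LE2 (f / g) (u - u') (v - v') := by
  rw [div_eq_mul_inv, sub_eq_add_neg, sub_eq_add_neg]
  exact hf.mul hg.inv

lemma LE2.prod {ι : Type*} (s : Finset ι) (f : ι → RatFunc ℂ) (u v : ι → ℂ)
    (h : ∀ i ∈ s, LE2 (f i) (u i) (v i)) :
    LE2 (∏ i ∈ s, f i) (∑ i ∈ s, u i) (∑ i ∈ s, v i) := by
  classical
  induction s using Finset.induction_on with
  | empty => simpa using LE2.one
  | insert a s ha ih =>
    rw [Finset.prod_insert ha, Finset.sum_insert ha, Finset.sum_insert ha]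
    exact (h a (by simp)).mul (ih fun i hi => h i (by simp [hi]))

lemma eval_lin (x p : ℂ) : RatFunc.eval (RingHom.id ℂ) x (RatFunc.X - RatFunc.C p) = x - p := by
  have : (RatFunc.X - RatFunc.C p : RatFunc ℂ) =
      algebraMap (Polynomial ℂ) (RatFunc ℂ) (Polynomial.X - Polynomial.C p) := by simp
  rw [this, RatFunc.eval_algebraMap]
  simp

lemma LE2.lin (p : ℂ) :
    LE2 ((RatFunc.X - RatFunc.C p) / RatFunc.X) (-p) (-(p ^ 2 / 2)) := by
  refine ⟨fun _ => 0, ?_, ?_⟩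
  · convert tendsto_const_nhds using 2
    ring
  · filter_upwards [evtl_ne_zero, evtl_mul ((RatFunc.X - RatFunc.C p) / RatFunc.X) RatFunc.X]
      with x hx h
    rw [div_mul_cancel₀ _ RatFunc.X_ne_zero, eval_lin, RatFunc.eval_X] at h
    field_simp
    linear_combination (-x) * h

lemma LE2.frac (p r : ℂ) :
    LE2 ((RatFunc.X - RatFunc.C p) / (RatFunc.X - RatFunc.C r)) (-p - -r)
      (-(p ^ 2 / 2) - -(r ^ 2 / 2)) := by
  have := (LE2.lin p).div (LE2.lin r)
  rwa [div_div_div_cancel_right₀ RatFunc.X_ne_zero] at this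

lemma shift_lin (s b : ℂ) :
    (RatFunc.X + RatFunc.C s - RatFunc.C b : RatFunc ℂ) = RatFunc.X - RatFunc.C (b - s) := by
  rw [map_sub]; ring

lemma kcharge_eq (N : ℕ) [NeZero N] (lam : ZMod N → YoungDiagram) (ω : ZMod N) :
    (kcharge N lam ω : ℂ) = ∑ ω' : ZMod N, ∑ c ∈ (lam ω').cells,
      if ω' + (c.2 : ZMod N) = ω then (1 : ℂ) else 0 := by
  simp [kcharge]

lemma cobs_eq (N : ℕ) [NeZero N] (ε₁ ε₂t : ℂ) (aT : ZMod N → ℂ)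
    (lam : ZMod N → YoungDiagram) (ω : ZMod N) :
    cobs N ε₁ ε₂t aT lam ω = ∑ ω' : ZMod N, ∑ c ∈ (lam ω').cells,
      if ω' + (c.2 : ZMod N) = ω then (aT ω' + ctil ε₁ ε₂t c + ε₁ / 2) else 0 := by
  rw [cobs, kcharge_eq, Finset.mul_sum, ← Finset.sum_add_distrib]
  refine Finset.sum_congr rfl fun ω' _ => ?_
  rw [Finset.sum_filter, Finset.mul_sum, ← Finset.sum_add_distrib]
  refine Finset.sum_congr rfl fun c _ => ?_
  split_ifs <;> ring

lemma LE2.Y (N : ℕ) [NeZero N] (ε₁ ε₂t : ℂ) (aT : ZMod N → ℂ) (ω : ZMod N) (s : ℂ)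
    (lam : ZMod N → YoungDiagram) :
    LE2 (Ycol N ε₁ ε₂t aT ω s lam / RatFunc.X)
      (s - aT ω + ε₁ * (kcharge N lam (ω - 1) - kcharge N lam ω))
      (-((aT ω - s) ^ 2 / 2) + ε₁ * (cobs N ε₁ ε₂t aT lam (ω - 1) - cobs N ε₁ ε₂t aT lam ω
        + (ε₂t - s) * kcharge N lam (ω - 1) + s * kcharge N lam ω)) := by
  rw [Ycol, mul_div_right_comm]
  simp only [shift_lin]
  have key := (LE2.lin (aT ω - s)).mul (LE2.prod Finset.univ _ _ _ fun ω' _ =>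
    LE2.prod (lam ω').cells (fun c => 
      ((if ω' + (c.2 : ZMod N) = ω then
          (RatFunc.X - RatFunc.C (aT ω' + ctil ε₁ ε₂t c + ε₁ - s)) /
            (RatFunc.X - RatFunc.C (aT ω' + ctil ε₁ ε₂t c - s))
        else 1) *
       (if ω' + (c.2 : ZMod N) = ω - 1 then
          (RatFunc.X - RatFunc.C (aT ω' + ctil ε₁ ε₂t c + ε₂t - s)) /
            (RatFunc.X - RatFunc.C (aT ω' + ctil ε₁ ε₂t c + ε₁ + ε₂t - s))
        else 1)))
      (fun c => ε₁ * ((if ω' + (c.2 : ZMod N) = ω - 1 then 1 else 0) -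
        (if ω' + (c.2 : ZMod N) = ω then 1 else 0)))
      (fun c => ε₁ * ((if ω' + (c.2 : ZMod N) = ω - 1 then
          (aT ω' + ctil ε₁ ε₂t c + ε₁ / 2) else 0) -
        (if ω' + (c.2 : ZMod N) = ω then (aT ω' + ctil ε₁ ε₂t c + ε₁ / 2) else 0) +
        (ε₂t - s) * (if ω' + (c.2 : ZMod N) = ω - 1 then 1 else 0) +
        s * (if ω' + (c.2 : ZMod N) = ω then 1 else 0))) fun c _ => by
        have h1 : LE2 (if ω' + (c.2 : ZMod N) = ω then
          (RatFunc.X - RatFunc.C (aT ω' + ctil ε₁ ε₂t c + ε₁ - s)) /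
            (RatFunc.X - RatFunc.C (aT ω' + ctil ε₁ ε₂t c - s))
          else 1) (if ω' + (c.2 : ZMod N) = ω then -ε₁ else 0)
            (if ω' + (c.2 : ZMod N) = ω then
              -ε₁ * (aT ω' + ctil ε₁ ε₂t c + ε₁ / 2 - s) else 0) := by
          split_ifs
          · exact (LE2.frac _ _).congr (by ring) (by ring)
          · exact LE2.one
        have h2 : LE2 (if ω' + (c.2 : ZMod N) = ω - 1 then
          (RatFunc.X - RatFunc.C (aT ω' + ctil ε₁ ε₂t c + ε₂t - s)) /
            (RatFunc.X - RatFunc.C (aT ω' + ctil ε₁ ε₂t c + ε₁ + ε₂t - s))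
          else 1) (if ω' + (c.2 : ZMod N) = ω - 1 then ε₁ else 0)
            (if ω' + (c.2 : ZMod N) = ω - 1 then
              ε₁ * (aT ω' + ctil ε₁ ε₂t c + ε₁ / 2 + ε₂t - s) else 0) := by
          split_ifs
          · exact (LE2.frac _ _).congr (by ring) (by ring)
          · exact LE2.one
        refine (h1.mul h2).congr ?_ ?_
        · split_ifs <;> ring
        · split_ifs <;> ring)
  refine key.congr ?_ ?_
  · simp only [← Finset.mul_sum, Finset.sum_sub_distrib, ← kcharge_eq]
    ring
  · simp only [← Finset.mul_sum, Finset.sum_sub_distrib, Finset.sum_add_distrib, ← kcharge_eq,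
      ← cobs_eq]

lemma LE2.final {f g : RatFunc ℂ} {u v u' v' : ℂ} (q L : ℂ) (hf : LE2 (f / RatFunc.X) u v)
    (hg : LE2 (g / RatFunc.X) u' v') (hL : L = v + u ^ 2 / 2 + q * (v' + u' ^ 2 / 2)) :
    ∃ aa bb : ℂ, Filter.Tendsto (fun x : ℂ => x *
      (RatFunc.eval (RingHom.id ℂ) x (f + RatFunc.C q * g) - aa * x - bb))
      (Filter.cocompact ℂ) (nhds L) := by
  obtain ⟨r, hr, er⟩ := hf
  obtain ⟨t, ht, et⟩ := hg
  refine ⟨1 + q, u + q * u', ?_⟩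
  rw [hL]
  refine (hr.add (ht.const_mul q)).congr' ?_
  filter_upwards [er, et, evtl_ne_zero, evtl_add f (RatFunc.C q * g), evtl_mul (RatFunc.C q) g,
    evtl_mul (f / RatFunc.X) RatFunc.X, evtl_mul (g / RatFunc.X) RatFunc.X]
    with x h1 h2 hx h3 h4 h5 h6
  rw [div_mul_cancel₀ _ RatFunc.X_ne_zero, RatFunc.eval_X] at h5 h6
  rw [h3, h4, RatFunc.eval_C, h5, h6, h1, h2, RingHom.id_apply]
  field_simp
  ring

lemma div_aux {K : Type*} [Field K] (a b y X : K) (hX : X ≠ 0) :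
    (a / X * (b / X)) / (y / X) = (a * b / y) / X := by
  by_cases hy : y = 0
  · simp [hy]
  · field_simp

/-- The coefficient of `x^{−1}` in the large-`x` Laurent expansion of the fractional
qq-character `𝒳_ω(x)|_λ̄ = Y_{ω+1}(x+ε̃)|_λ̄ + 𝔮_ω·P_ω(x)/Y_ω(x)|_λ̄` equals
`ε₁²·[(c_ω − c_{ω+1} − 𝔮_ω(c_{ω−1} − c_ω))/ε₁ + κ̃(k_ω − 𝔮_ω k_{ω−1})
  + 𝔮_ω((d_ω + M_ω)² − δμ_ω² − d_ω²) + ½(d_{ω+1}² + 𝔮_ω d_ω² + 𝔮_ω A_ω² − A_{ω+1}²)]`,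
with `M_ω = (m̃⁺_ω + m̃⁻_ω)/(2ε₁)`, `δμ_ω = (m̃⁺_ω − m̃⁻_ω)/(2ε₁)`. Here the coefficient
of `x^{−1}` of a rational function with expansion `a·x + b + c·x^{−1} + O(x^{−2})` is
characterized by `c = lim_{x→∞} x·(f(x) − a·x − b)`. -/
theorem fractional_qq_character_x_inv_coefficient (N : ℕ) [NeZero N]
    (ε₁ ε₂t : ℂ) (aT mp mm : ZMod N → ℂ)
    (hgen : ∀ ω' ω'' : ZMod N, ∀ i j : ℤ,
      aT ω' - aT ω'' + (i : ℂ) * ε₁ + (j : ℂ) * ε₂t = 0 → ω' = ω'' ∧ i = 0 ∧ j = 0)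
    (lam : ZMod N → YoungDiagram) (ω : ZMod N) (q : ℂ) :
    ∃ aa bb : ℂ,
      Filter.Tendsto
        (fun x : ℂ => x *
          (RatFunc.eval (RingHom.id ℂ) x
              (Ycol N ε₁ ε₂t aT (ω + 1) (ε₁ + ε₂t) lam +
                RatFunc.C q *
                  ((RatFunc.X - RatFunc.C (mp ω)) * (RatFunc.X - RatFunc.C (mm ω)) /
                    Ycol N ε₁ ε₂t aT ω 0 lam)) -
            aa * x - bb))
        (Filter.cocompact ℂ)
        (nhds (ε₁ ^ 2 *
          ((cobs N ε₁ ε₂t aT lam ω - cobs N ε₁ ε₂t aT lam (ω + 1) -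
              q * (cobs N ε₁ ε₂t aT lam (ω - 1) - cobs N ε₁ ε₂t aT lam ω)) / ε₁ +
            (ε₂t / ε₁) * ((kcharge N lam ω : ℂ) - q * (kcharge N lam (ω - 1) : ℂ)) +
            q * ((dobs N ε₁ aT lam ω + (mp ω + mm ω) / (2 * ε₁)) ^ 2 -
              ((mp ω - mm ω) / (2 * ε₁)) ^ 2 - dobs N ε₁ aT lam ω ^ 2) +
            (1 / 2) * (dobs N ε₁ aT lam (ω + 1) ^ 2 + q * dobs N ε₁ aT lam ω ^ 2 +
              q * (aT ω / ε₁) ^ 2 - (aT (ω + 1) / ε₁) ^ 2)))) := by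
  have hε : ε₁ ≠ 0 := by
    intro h
    have := hgen 0 0 1 0 (by simp [h])
    simp at this
  have hP := ((LE2.lin (mp ω)).mul (LE2.lin (mm ω))).div (LE2.Y N ε₁ ε₂t aT ω 0 lam)
  have hX : (RatFunc.X : RatFunc ℂ) ≠ 0 := RatFunc.X_ne_zero
  have e : ((RatFunc.X - RatFunc.C (mp ω)) / RatFunc.X * ((RatFunc.X - RatFunc.C (mm ω)) /
      RatFunc.X)) / (Ycol N ε₁ ε₂t aT ω 0 lam / RatFunc.X) =
      ((RatFunc.X - RatFunc.C (mp ω)) * (RatFunc.X - RatFunc.C (mm ω)) /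
        Ycol N ε₁ ε₂t aT ω 0 lam) / RatFunc.X := div_aux _ _ _ _ hX
  rw [e] at hP
  refine LE2.final q _ (LE2.Y N ε₁ ε₂t aT (ω + 1) (ε₁ + ε₂t) lam) hP ?_
  simp only [dobs, add_sub_cancel_right]
  field_simp
  ring
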